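/- Let F(x,y) = Σ_{m,n≥0} a_{m,n} x^m y^n be given by a power series converging absolutely on a polydisc {|x| < R₀, |y| < R₀}, and let k, l be positive integers with a_{k,0} ≠ 0, a_{0,l} ≠ 0, and a_{m,n} = 0 whenever l·m + k·n < k·l. Then for every R₁ > 1 and every real c with 0 < c < 1/max(k,l): lim_{s→0, s∈ℂ\{0}} |s|^{2l − 2klc} · ∫_{{z : 1/R₁ < |z| < R₁}} |s^{−kl}·F(s^l·z, s^k·z^{−1})|^{−2c} dλ(z) = 0. -/

import Mathlib

open MeasureTheory Filter
open scoped ENNReal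

lemma mac_key {U : Set ℂ} {z₀ : ℂ} {ρ : ℝ} (hρ : 0 < ρ) (hU : Metric.closedBall z₀ ρ ⊆ U)
    (hUo : IsOpen U) (A : ℂ) (d : ℕ) :
    ∀ (p : Polynomial ℂ) (e : ℂ → ℂ) (η : ℝ), p.natDegree ≤ d → p.coeff d = A →
      DifferentiableOn ℂ e U → (∀ z ∈ Metric.closedBall z₀ ρ, ‖e z‖ ≤ η) →
      (4 / ρ) ^ d * η ≤ ‖A‖ / 2 →
      ∃ w : Fin d → ℂ, (∀ i, w i ∈ Metric.closedBall z₀ (ρ / 2)) ∧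
        ∀ z ∈ Metric.closedBall z₀ (ρ / 2),
          ‖A‖ / 2 * (1 / 2) ^ d * ∏ i, ‖z - w i‖ ≤ ‖p.eval z + e z‖ := by
  have hsub : Metric.closedBall z₀ (ρ / 2) ⊆ Metric.closedBall z₀ ρ :=
    Metric.closedBall_subset_closedBall (by linarith)
  induction d with
  | zero =>
    intro p e η hp hA he hη hs
    refine ⟨fun i => 0, fun i => i.elim0, fun z hz => ?_⟩
    have h1 := hη z (hsub hz)
    rw [Polynomial.eq_C_of_natDegree_le_zero hp, hA]
    simp at hs ⊢
    have := norm_sub_le_norm_add A (e z)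
    linarith
  | succ d ih =>
    intro p e η hp hA he hη hs
    have hcont : ContinuousOn (fun z => ‖p.eval z + e z‖) (Metric.closedBall z₀ (ρ / 2)) :=
      (p.continuous.continuousOn.add (he.continuousOn.mono (hsub.trans hU))).norm
    obtain ⟨w, hw, hmin⟩ := (isCompact_closedBall z₀ (ρ / 2)).exists_isMinOn
      ⟨z₀, Metric.mem_closedBall_self (by linarith)⟩ hcont
    set q := p /ₘ (Polynomial.X - Polynomial.C w) with hq
    have hpq : p = Polynomial.C (p.eval w) + (Polynomial.X - Polynomial.C w) * q := by
      rw [hq, ← Polynomial.modByMonic_X_sub_C_eq_C_eval, Polynomial.modByMonic_add_div]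
    have hqd : q.natDegree ≤ d := by
      rw [hq, Polynomial.natDegree_divByMonic _ (Polynomial.monic_X_sub_C w),
        Polynomial.natDegree_X_sub_C]
      omega
    have hqA : q.coeff d = A := by
      rw [← hA]
      conv_rhs => rw [hpq]
      rw [Polynomial.coeff_add, Polynomial.coeff_X_sub_C_mul, Polynomial.coeff_C_succ,
        Polynomial.coeff_eq_zero_of_natDegree_lt (n := d + 1) (by omega)]
      ring
    have hwU : U ∈ nhds w := hUo.mem_nhds (hU (hsub hw))
    have he' : DifferentiableOn ℂ (dslope e w) U :=
      (Complex.differentiableOn_dslope hwU).2 he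
    have hη0 : 0 ≤ η := (norm_nonneg _).trans (hη z₀ (Metric.mem_closedBall_self hρ.le))
    have hη' : ∀ z ∈ Metric.closedBall z₀ ρ, ‖dslope e w z‖ ≤ 4 / ρ * η := by
      intro z hz
      refine Complex.norm_le_of_forall_mem_frontier_norm_le (U := Metric.ball z₀ ρ)
        Metric.isBounded_ball ?_ ?_ ?_
      · exact (he'.mono hU).diffContOnCl_ball subset_rfl
      · intro y hy
        rw [frontier_ball _ hρ.ne', mem_sphere_iff_norm] at hy
        have hyw : ρ / 2 ≤ ‖y - w‖ := by
          have h2 := mem_closedBall_iff_norm.1 hw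
          have : ‖y - z₀‖ ≤ ‖y - w‖ + ‖w - z₀‖ := by
            simpa using norm_add_le (y - w) (w - z₀)
          linarith
        have hne : y ≠ w := by
          rintro rfl
          simp at hyw
          linarith
        rw [dslope_of_ne _ hne, slope_def_field, norm_div, div_le_iff₀ (by linarith)]
        have h3 : ‖e y - e w‖ ≤ 2 * η := by
          have := norm_sub_le (e y) (e w)
          have := hη y (mem_closedBall_iff_norm.2 hy.le)
          have := hη w (hsub hw)
          linarith
        calc ‖e y - e w‖ ≤ 2 * η := h3
          _ = 4 / ρ * η * (ρ / 2) := by field_simp; ring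
          _ ≤ _ := by gcongr
      · rwa [closure_ball _ hρ.ne']
    obtain ⟨v, hv, hvb⟩ := ih q (dslope e w) (4 / ρ * η) hqd hqA he' hη'
      (by rw [← mul_assoc, ← pow_succ]; exact hs)
    refine ⟨Fin.cons w v, fun i => ?_, fun z hz => ?_⟩
    · refine Fin.cases ?_ (fun j => ?_) i
      · simpa using hw
      · simpa using hv j
    · rw [Fin.prod_univ_succ]
      simp only [Fin.cons_zero, Fin.cons_succ]
      have h1 := hvb z hz
      have h2 : ‖p.eval w + e w‖ ≤ ‖p.eval z + e z‖ := hmin hz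
      have h3 : (p.eval z + e z) - (p.eval w + e w) = (z - w) * (q.eval z + dslope e w z) := by
        have ha : p.eval z = p.eval w + (z - w) * q.eval z := by
          conv_lhs => rw [hpq]
          simp
        have hb : (z - w) * dslope e w z = e z - e w := by
          simpa using sub_smul_dslope e w z
        rw [mul_add, hb, ha]
        ring
      have h4 := norm_sub_le (p.eval z + e z) (p.eval w + e w)
      rw [h3, norm_mul] at h4
      have h5 : ‖z - w‖ * (‖A‖ / 2 * (1 / 2) ^ d * ∏ i, ‖z - v i‖) ≤
        ‖z - w‖ * ‖q.eval z + dslope e w z‖ := by gcongr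
      rw [pow_succ]
      linarith

lemma mac_int (d : ℕ) {c : ℝ} (hc : 0 < c) (hcd : c * d < 1) {ρ : ℝ} (z₀ : ℂ)
    {K : ℝ} (hK : 0 < K) :
    ∃ C : ℝ≥0∞, C ≠ ⊤ ∧ ∀ (f : ℂ → ℂ) (w : Fin d → ℂ),
      (∀ i, w i ∈ Metric.closedBall z₀ (ρ / 2)) →
      (∀ z ∈ Metric.closedBall z₀ (ρ / 2), K * ∏ i, ‖z - w i‖ ≤ ‖f z‖) →
      ∫⁻ z in Metric.closedBall z₀ (ρ / 2), ENNReal.ofReal (‖f z‖ ^ (-(2 * c))) ≤ C := by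
  set t : ℝ := 2 * c * d with ht
  set J : ℝ≥0∞ := ∫⁻ u in Metric.closedBall (0 : ℂ) ρ, ENNReal.ofReal (‖u‖ ^ (-t)) with hJ
  have hJt : J ≠ ⊤ := by
    have hmeas : Measurable (fun u : ℂ => ‖u‖ ^ (-t)) := by fun_prop
    have h1 : LocallyIntegrable (fun u : ℂ => ‖u‖ ^ (-t)) volume := by
      refine locallyIntegrable_of_norm_le_rpow (C := 1) (α := t) ?_ ?_ ?_ ?_
      · simp
      · simp; linarith
      · refine Eventually.of_forall fun u => ?_
        rw [one_mul, Real.norm_of_nonneg (by positivity)]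
      · exact hmeas.aestronglyMeasurable
    have h2 := h1.integrableOn_isCompact (isCompact_closedBall (0 : ℂ) ρ)
    have h3 := h2.lintegral_lt_top
    exact h3.ne
  refine ⟨ENNReal.ofReal (K ^ (-(2 * c))) *
    (volume (Metric.closedBall z₀ (ρ / 2)) + d * J), ?_, ?_⟩
  · refine ENNReal.mul_ne_top ENNReal.ofReal_ne_top (ENNReal.add_ne_top.2 ⟨?_, ?_⟩)
    · exact measure_closedBall_lt_top.ne
    · exact ENNReal.mul_ne_top (by simp) hJt
  intro f w hw hf
  have hae : ∀ᵐ z : ℂ, ∀ i, z ≠ w i := by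
    rw [ae_all_iff]
    intro i
    exact Measure.ae_ne volume (w i)
  have hJi : ∀ i, ∫⁻ z in Metric.closedBall z₀ (ρ / 2), ENNReal.ofReal (‖z - w i‖ ^ (-t)) ≤ J := by
    intro i
    have hs : Metric.closedBall z₀ (ρ / 2) ⊆ Metric.closedBall (w i) ρ := by
      apply Metric.closedBall_subset_closedBall'
      have := hw i
      rw [Metric.mem_closedBall, dist_comm] at this
      linarith
    refine (lintegral_mono_set hs).trans ?_
    rw [hJ, ← lintegral_indicator measurableSet_closedBall,
      ← lintegral_indicator measurableSet_closedBall]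
    rw [← lintegral_add_right_eq_self _ (w i)]
    apply le_of_eq
    congr 1
    ext z
    simp [Set.indicator, dist_eq_norm]
  calc ∫⁻ z in Metric.closedBall z₀ (ρ / 2), ENNReal.ofReal (‖f z‖ ^ (-(2 * c)))
      ≤ ∫⁻ z in Metric.closedBall z₀ (ρ / 2), ENNReal.ofReal (K ^ (-(2 * c))) *
          (1 + ∑ i, ENNReal.ofReal (‖z - w i‖ ^ (-t))) := by
        refine lintegral_mono_ae ?_
        rw [ae_restrict_iff' measurableSet_closedBall]
        filter_upwards [hae] with z hz hzb
        have hfz := hf z hzb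
        have hsum : ENNReal.ofReal (K ^ (-(2 * c))) * (1 + ∑ i, ENNReal.ofReal (‖z - w i‖ ^ (-t)))
            = ENNReal.ofReal (K ^ (-(2 * c)) * (1 + ∑ i, ‖z - w i‖ ^ (-t))) := by
          rw [ENNReal.ofReal_mul (by positivity), ENNReal.ofReal_add (by norm_num) (by positivity),
            ENNReal.ofReal_sum_of_nonneg (fun i _ => by positivity), ENNReal.ofReal_one]
        rw [hsum]
        apply ENNReal.ofReal_le_ofReal
        have hpos : ∀ i, 0 < ‖z - w i‖ := fun i => norm_pos_iff.2 (sub_ne_zero.2 (hz i))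
        have hprod : 0 < ∏ i, ‖z - w i‖ := Finset.prod_pos fun i _ => hpos i
        calc ‖f z‖ ^ (-(2 * c)) ≤ (K * ∏ i, ‖z - w i‖) ^ (-(2 * c)) :=
              Real.rpow_le_rpow_of_nonpos (by positivity) hfz (by linarith)
          _ = K ^ (-(2 * c)) * (∏ i, ‖z - w i‖) ^ (-(2 * c)) :=
              Real.mul_rpow hK.le hprod.le
          _ ≤ _ := by
            gcongr
            rcases Nat.eq_zero_or_pos d with rfl | hd
            · simp
            · have : Nonempty (Fin d) := ⟨⟨0, hd⟩⟩
              obtain ⟨i, -, hi⟩ := Finset.exists_min_image Finset.univ (fun i => ‖z - w i‖)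
                Finset.univ_nonempty
              have h1 : ‖z - w i‖ ^ d ≤ ∏ j, ‖z - w j‖ := by
                calc ‖z - w i‖ ^ d = ∏ j : Fin d, ‖z - w i‖ := by simp
                  _ ≤ _ := Finset.prod_le_prod (fun j _ => (hpos i).le) hi
              have h2 : (∏ j, ‖z - w j‖) ^ (-(2 * c)) ≤ ‖z - w i‖ ^ (-t) := by
                calc _ ≤ (‖z - w i‖ ^ d) ^ (-(2 * c)) :=
                      Real.rpow_le_rpow_of_nonpos (pow_pos (hpos i) _) h1 (by linarith)
                  _ = _ := by
                      rw [← Real.rpow_natCast, ← Real.rpow_mul (hpos i).le]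
                      congr 1
                      rw [ht]; ring
              have h3 : ‖z - w i‖ ^ (-t) ≤ ∑ i, ‖z - w i‖ ^ (-t) :=
                Finset.single_le_sum (f := fun i => ‖z - w i‖ ^ (-t))
                  (fun j _ => by positivity) (Finset.mem_univ i)
              linarith
    _ = ENNReal.ofReal (K ^ (-(2 * c))) * (volume (Metric.closedBall z₀ (ρ / 2)) +
          ∑ i, ∫⁻ z in Metric.closedBall z₀ (ρ / 2), ENNReal.ofReal (‖z - w i‖ ^ (-t))) := by
        rw [lintegral_const_mul _ (by fun_prop), lintegral_add_left (by fun_prop),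
          lintegral_finsetSum _ (by intro i _; fun_prop)]
        simp
    _ ≤ _ := by
        gcongr
        calc _ ≤ ∑ i : Fin d, J := Finset.sum_le_sum fun i _ => hJi i
          _ = _ := by simp

lemma mac_local {U : Set ℂ} (hUo : IsOpen U) {z₀ : ℂ} (hz₀ : z₀ ∈ U) (P Q : ℂ → ℂ)
    (f : ℂ → ℂ → ℂ) (C₀ : ℝ)
    (hf : ∀ᶠ s in nhdsWithin (0 : ℂ) {0}ᶜ, DifferentiableOn ℂ (f s) U ∧
      ∀ z ∈ U, ‖f s z - P z‖ ≤ C₀ * ‖s‖)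
    (d : ℕ) (hP : ∀ z ∈ U, P z = (z - z₀) ^ d * Q z) (hQ : ContinuousAt Q z₀) (hQ0 : Q z₀ ≠ 0)
    {c : ℝ} (hc : 0 < c) (hcd : c * d < 1) :
    ∃ V ∈ nhds z₀, ∃ C : ℝ≥0∞, C ≠ ⊤ ∧ ∀ᶠ s in nhdsWithin (0 : ℂ) {0}ᶜ,
      ∫⁻ z in V, ENNReal.ofReal (‖f s z‖ ^ (-(2 * c))) ≤ C := by
  set A := Q z₀ with hA
  have hApos : 0 < ‖A‖ := norm_pos_iff.2 hQ0
  set ε : ℝ := ‖A‖ / (4 * 4 ^ d) with hε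
  have hεpos : 0 < ε := by positivity
  have h1 : ∀ᶠ z in nhds z₀, z ∈ U ∧ ‖Q z - A‖ < ε := by
    refine Filter.Eventually.and (hUo.mem_nhds hz₀) ?_
    have := Metric.tendsto_nhds.1 hQ ε hεpos
    simpa [dist_eq_norm] using this
  obtain ⟨ρ, hρ, hball⟩ := Metric.nhds_basis_closedBall.eventually_iff.1 h1
  have hsubU : Metric.closedBall z₀ ρ ⊆ U := fun z hz => (hball hz).1
  obtain ⟨C, hC, hint⟩ := mac_int d hc hcd (ρ := ρ) z₀
    (K := ‖A‖ / 2 * (1 / 2) ^ d) (by positivity)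
  refine ⟨Metric.closedBall z₀ (ρ / 2), Metric.closedBall_mem_nhds _ (by linarith), C, hC, ?_⟩
  have hsmall : ∀ᶠ s in nhdsWithin (0 : ℂ) {0}ᶜ, C₀ * ‖s‖ < ρ ^ d * ε := by
    have : Tendsto (fun s : ℂ => C₀ * ‖s‖) (nhdsWithin (0 : ℂ) {0}ᶜ) (nhds 0) := by
      have h : Continuous (fun s : ℂ => C₀ * ‖s‖) := by fun_prop
      have h' := h.tendsto 0
      simp only [norm_zero, mul_zero] at h'
      exact h'.mono_left nhdsWithin_le_nhds
    exact this.eventually_lt_const (by positivity)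
  filter_upwards [hf, hsmall] with s ⟨hs1, hs2⟩ hs3
  suffices hkey : ∃ w : Fin d → ℂ, (∀ i, w i ∈ Metric.closedBall z₀ (ρ / 2)) ∧
        ∀ z ∈ Metric.closedBall z₀ (ρ / 2),
          ‖A‖ / 2 * (1 / 2) ^ d * ∏ i, ‖z - w i‖ ≤
            ‖(Polynomial.C A * (Polynomial.X - Polynomial.C z₀) ^ d).eval z +
              (f s z - A * (z - z₀) ^ d)‖ by
    obtain ⟨w, hw, hwb⟩ := hkey
    refine hint (f s) w hw fun z hz => ?_
    have := hwb z hz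
    simpa using this
  refine mac_key hρ hsubU hUo A d
    (Polynomial.C A * (Polynomial.X - Polynomial.C z₀) ^ d)
    (fun z => f s z - A * (z - z₀) ^ d) (2 * (ρ ^ d * ε)) ?_ ?_ ?_ ?_ ?_
  · refine (Polynomial.natDegree_C_mul_le _ _).trans ?_
    rw [Polynomial.natDegree_pow, Polynomial.natDegree_X_sub_C, mul_one]
  · rw [Polynomial.coeff_C_mul]
    have hm := (Polynomial.monic_X_sub_C z₀).pow d
    have := hm.coeff_natDegree
    rw [Polynomial.natDegree_pow, Polynomial.natDegree_X_sub_C, mul_one] at this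
    rw [this, mul_one]
  · exact hs1.sub (by fun_prop)
  · intro z hz
    have e1 : f s z - A * (z - z₀) ^ d = (f s z - P z) + (z - z₀) ^ d * (Q z - A) := by
      rw [hP z (hsubU hz)]; ring
    rw [e1]
    refine (norm_add_le _ _).trans ?_
    have e2 : ‖(z - z₀) ^ d * (Q z - A)‖ ≤ ρ ^ d * ε := by
      rw [norm_mul, norm_pow]
      have := mem_closedBall_iff_norm.1 hz
      have := (hball hz).2.le
      gcongr
    have := hs2 z (hsubU hz)
    linarith
  · have : (4 / ρ) ^ d * (2 * (ρ ^ d * ε)) = ‖A‖ / 2 := by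
      rw [hε, div_pow]; field_simp; ring
    exact this.le

lemma mac_factor (q : Polynomial ℂ) (hq : q ≠ 0) (d N l : ℕ) (hqd : q.natDegree ≤ d) (hN : 0 < N)
    (z₀ : ℂ) (hz₀ : z₀ ≠ 0) :
    ∃ e ≤ d, ∃ Q : ℂ → ℂ, ContinuousAt Q z₀ ∧ Q z₀ ≠ 0 ∧
      ∀ z, (z⁻¹) ^ l * q.eval (z ^ N) = (z - z₀) ^ e * Q z := by
  obtain ⟨q₁, h1, h2⟩ := Polynomial.exists_eq_pow_rootMultiplicity_mul_and_not_dvd q hq (z₀ ^ N)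
  set e := q.rootMultiplicity (z₀ ^ N) with he
  refine ⟨e, ?_, fun z => (z⁻¹) ^ l * (∑ i ∈ Finset.range N, z ^ i * z₀ ^ (N - 1 - i)) ^ e *
    q₁.eval (z ^ N), ?_, ?_, ?_⟩
  · refine le_trans ?_ hqd
    rw [he]
    calc _ ≤ q.roots.card := by rw [← Polynomial.count_roots]; exact Multiset.count_le_card _ _
      _ ≤ _ := Polynomial.card_roots' q
  · have : ContinuousAt (fun z : ℂ => z⁻¹) z₀ := continuousAt_inv₀ hz₀
    have h3 : ContinuousAt (fun z : ℂ => q₁.eval (z ^ N)) z₀ :=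
      (q₁.continuous.comp (continuous_pow N)).continuousAt
    have h4 : ContinuousAt (fun z : ℂ =>
      (∑ i ∈ Finset.range N, z ^ i * z₀ ^ (N - 1 - i)) ^ e) z₀ := by
      apply Continuous.continuousAt; fun_prop
    exact ((this.pow l).mul h4).mul h3
  · have h5 : (∑ i ∈ Finset.range N, z₀ ^ i * z₀ ^ (N - 1 - i)) = N * z₀ ^ (N - 1) :=
      geom_sum₂_self z₀ N
    simp only [h5]
    have h6 : q₁.eval (z₀ ^ N) ≠ 0 := fun h => h2 (Polynomial.dvd_iff_isRoot.2 h)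
    have : (N : ℂ) ≠ 0 := by exact_mod_cast hN.ne'
    simp [hz₀, h6, this]
  · intro z
    conv_lhs => rw [h1]
    have := geom_sum₂_mul z z₀ N
    simp only [Polynomial.eval_mul, Polynomial.eval_pow, Polynomial.eval_sub, Polynomial.eval_X,
      Polynomial.eval_C]
    rw [← this, mul_pow]
    ring

lemma mac_P (a : ℕ → ℕ → ℂ) (k l : ℕ) (hk : 0 < k) (hl : 0 < l)
    (hak : a k 0 ≠ 0) :
    ∃ (q : Polynomial ℂ) (d N : ℕ), q ≠ 0 ∧ q.natDegree ≤ d ∧ 0 < N ∧ d ≤ k ∧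
      ∀ z : ℂ, z ≠ 0 → HasSum (fun mn : ℕ × ℕ =>
        if l * mn.1 + k * mn.2 = k * l then a mn.1 mn.2 * z ^ mn.1 * (z⁻¹) ^ mn.2 else 0)
        ((z⁻¹) ^ l * q.eval (z ^ N)) := by
  obtain ⟨k', l', hco, hk', hl'⟩ := Nat.exists_coprime k l
  set g := Nat.gcd k l with hg
  have hgpos : 0 < g := Nat.gcd_pos_of_pos_left _ hk
  have hk'pos : 0 < k' := Nat.pos_of_ne_zero (by rintro rfl; omega)
  have hl'pos : 0 < l' := Nat.pos_of_ne_zero (by rintro rfl; omega)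
  set q : Polynomial ℂ := ∑ i ∈ Finset.range (g + 1),
    Polynomial.C (a (i * k') ((g - i) * l')) * Polynomial.X ^ i with hq
  refine ⟨q, g, k' + l', ?_, ?_, by omega, Nat.gcd_le_left _ hk, ?_⟩
  · intro h0
    have : q.coeff g = a k 0 := by
      rw [hq, Polynomial.finsetSum_coeff]
      simp only [Polynomial.coeff_C_mul, Polynomial.coeff_X_pow]
      rw [Finset.sum_eq_single g]
      · simp [hk', mul_comm]
      · intro b _ hb; simp [hb.symm]
      · simp
    rw [h0] at this
    exact hak (by simpa using this.symm)
  · refine Polynomial.natDegree_sum_le_of_forall_le _ _ fun i hi => ?_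
    refine (Polynomial.natDegree_C_mul_X_pow_le _ _).trans ?_
    have := Finset.mem_range.1 hi
    omega
  · intro z hz
    set φ : ℕ → ℕ × ℕ := fun i => (i * k', (g - i) * l') with hφ
    have hinj : Function.Injective φ := by
      intro i j hij
      have := congrArg Prod.fst hij
      exact Nat.eq_of_mul_eq_mul_right hk'pos this
    have hmem : ∀ i ∈ Finset.range (g + 1), l * (φ i).1 + k * (φ i).2 = k * l := by
      intro i hi
      have : i ≤ g := by have := Finset.mem_range.1 hi; omega
      obtain ⟨j, hj⟩ := Nat.exists_eq_add_of_le this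
      have hj' : g - i = j := by omega
      simp only [hφ, hj']
      rw [hk', hl', hj]; ring
    have hval : (z⁻¹) ^ l * q.eval (z ^ (k' + l')) = ∑ mn ∈ (Finset.range (g + 1)).image φ,
        if l * mn.1 + k * mn.2 = k * l then a mn.1 mn.2 * z ^ mn.1 * (z⁻¹) ^ mn.2 else 0 := by
      rw [Finset.sum_image hinj.injOn, hq, Polynomial.eval_finsetSum, Finset.mul_sum]
      refine Finset.sum_congr rfl fun i hi => ?_
      rw [if_pos (hmem i hi)]
      have : i ≤ g := by have := Finset.mem_range.1 hi; omega
      obtain ⟨j, hj⟩ := Nat.exists_eq_add_of_le this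
      have hj' : g - i = j := by omega
      simp only [hφ, hj', Polynomial.eval_mul, Polynomial.eval_C, Polynomial.eval_pow,
        Polynomial.eval_X]
      have e1 : l = i * l' + j * l' := by rw [hl', hj]; ring
      rw [e1, pow_add, ← pow_mul, add_mul, pow_add, inv_pow, inv_pow, mul_comm l' i, mul_comm k' i]
      field_simp
    rw [hval]
    refine hasSum_sum_of_ne_finset_zero fun mn hmn => ?_
    rw [if_neg]
    intro h
    apply hmn
    obtain ⟨m, n⟩ := mn
    simp only at h
    have h' : l' * m + k' * n = k' * l' * g := by
      apply Nat.eq_of_mul_eq_mul_left hgpos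
      calc g * (l' * m + k' * n) = l * m + k * n := by rw [hk', hl']; ring
        _ = k * l := h
        _ = _ := by rw [hk', hl']; ring
    have hdvd : k' ∣ l' * m := by
      have h2 : k' ∣ l' * m + k' * n := by rw [h', mul_assoc]; exact dvd_mul_right _ _
      exact (Nat.dvd_add_left (dvd_mul_right _ _)).1 h2
    obtain ⟨i, rfl⟩ := hco.dvd_of_dvd_mul_left hdvd
    have h3 : l' * i + n = l' * g := by
      apply Nat.eq_of_mul_eq_mul_left hk'pos
      linarith
    have hig : i ≤ g := by
      apply Nat.le_of_mul_le_mul_left _ hl'pos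
      omega
    rw [Finset.mem_image]
    refine ⟨i, Finset.mem_range.2 (by omega), ?_⟩
    simp only [hφ, Prod.mk.injEq]
    refine ⟨mul_comm _ _, ?_⟩
    obtain ⟨j, hj⟩ := Nat.exists_eq_add_of_le hig
    have hj' : g - i = j := by omega
    rw [hj'] 
    rw [hj] at h3
    linarith

lemma mac_uniform
    (R₀ : ℝ) (hR₀ : 0 < R₀) (a : ℕ → ℕ → ℂ) (F : ℂ → ℂ → ℂ)
    (hconv : ∀ x y : ℂ, ‖x‖ < R₀ → ‖y‖ < R₀ →
      Summable (fun mn : ℕ × ℕ => ‖a mn.1 mn.2‖ * ‖x‖ ^ mn.1 * ‖y‖ ^ mn.2))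
    (hF : ∀ x y : ℂ, ‖x‖ < R₀ → ‖y‖ < R₀ →
      F x y = ∑' mn : ℕ × ℕ, a mn.1 mn.2 * x ^ mn.1 * y ^ mn.2)
    (k l : ℕ) (hk : 0 < k) (hl : 0 < l)
    (hNewton : ∀ m n : ℕ, l * m + k * n < k * l → a m n = 0)
    (R : ℝ) (hR : 0 < R) (P : ℂ → ℂ)
    (hP : ∀ z : ℂ, z ≠ 0 → HasSum (fun mn : ℕ × ℕ =>
        if l * mn.1 + k * mn.2 = k * l then a mn.1 mn.2 * z ^ mn.1 * (z⁻¹) ^ mn.2 else 0) (P z)) :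
    ∃ C₀ : ℝ, ∀ᶠ s in nhdsWithin (0 : ℂ) {0}ᶜ,
      DifferentiableOn ℂ (fun z => F (s ^ l * z) (s ^ k * z⁻¹) / s ^ (k * l))
        {z : ℂ | 1 / R < ‖z‖ ∧ ‖z‖ < R} ∧
      ∀ z ∈ {z : ℂ | 1 / R < ‖z‖ ∧ ‖z‖ < R},
        ‖F (s ^ l * z) (s ^ k * z⁻¹) / s ^ (k * l) - P z‖ ≤ C₀ * ‖s‖ := by
  set U : Set ℂ := {z : ℂ | 1 / R < ‖z‖ ∧ ‖z‖ < R} with hU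
  have hUo : IsOpen U :=
    (isOpen_lt continuous_const continuous_norm).inter (isOpen_lt continuous_norm continuous_const)
  have hUpos : ∀ z ∈ U, 0 < ‖z‖ := fun z hz => lt_trans (by positivity) hz.1
  have hUinv : ∀ z ∈ U, ‖z⁻¹‖ ≤ R := by
    intro z hz
    rw [norm_inv]
    have := hz.1.le
    rw [one_div] at this
    exact inv_le_of_inv_le₀ hR this
  obtain ⟨σ, hσ0, hσ1, hσR⟩ : ∃ σ : ℝ, 0 < σ ∧ σ ≤ 1 ∧ σ * R < R₀ := by
    refine ⟨min 1 (R₀ / (2 * R)), by positivity, min_le_left _ _, ?_⟩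
    calc min 1 (R₀ / (2 * R)) * R ≤ R₀ / (2 * R) * R := by gcongr; exact min_le_right _ _
      _ = R₀ / 2 := by field_simp
      _ < R₀ := by linarith
  have hσp : ∀ j : ℕ, 0 < j → σ ^ j * R < R₀ := by
    intro j hj
    refine lt_of_le_of_lt ?_ hσR
    gcongr
    exact pow_le_of_le_one hσ0.le hσ1 hj.ne'
  set u : ℕ × ℕ → ℝ := fun mn => ‖a mn.1 mn.2‖ * (σ ^ l * R) ^ mn.1 * (σ ^ k * R) ^ mn.2 with hu
  have hu0 : ∀ mn, 0 ≤ u mn := fun mn => by positivity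
  have husum : Summable u := by
    have e1 : ∀ j : ℕ, ‖((σ ^ j * R : ℝ) : ℂ)‖ = σ ^ j * R := fun j => by
      rw [Complex.norm_real, Real.norm_of_nonneg (by positivity)]
    have := hconv ((σ ^ l * R : ℝ) : ℂ) ((σ ^ k * R : ℝ) : ℂ)
      (by rw [e1]; exact hσp l hl) (by rw [e1]; exact hσp k hk)
    simpa only [e1] using this
  refine ⟨(σ ^ (k * l + 1))⁻¹ * ∑' mn, u mn, ?_⟩
  have hsσ : ∀ᶠ s in nhdsWithin (0 : ℂ) {0}ᶜ, ‖s‖ < σ := by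
    have := Metric.ball_mem_nhds (0 : ℂ) hσ0
    filter_upwards [nhdsWithin_le_nhds this] with s hs
    simpa using hs
  filter_upwards [hsσ, self_mem_nhdsWithin] with s hs hs0
  have hs0 : s ≠ 0 := hs0
  have hspos : 0 < ‖s‖ := norm_pos_iff.2 hs0
  have hx : ∀ z ∈ U, ‖s ^ l * z‖ ≤ σ ^ l * R := by
    intro z hz
    rw [norm_mul, norm_pow]
    have := hz.2.le
    gcongr
  have hy : ∀ z ∈ U, ‖s ^ k * z⁻¹‖ ≤ σ ^ k * R := by
    intro z hz
    rw [norm_mul, norm_pow]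
    have := hUinv z hz
    gcongr
  have htb : ∀ (mn : ℕ × ℕ) (z : ℂ), z ∈ U →
      ‖a mn.1 mn.2 * (s ^ l * z) ^ mn.1 * (s ^ k * z⁻¹) ^ mn.2‖ ≤ u mn := by
    intro mn z hz
    rw [norm_mul, norm_mul, norm_pow _ mn.1, norm_pow _ mn.2]
    have := hx z hz
    have := hy z hz
    simp only [hu]
    gcongr
  have hFe : ∀ z ∈ U, F (s ^ l * z) (s ^ k * z⁻¹) =
      ∑' mn : ℕ × ℕ, a mn.1 mn.2 * (s ^ l * z) ^ mn.1 * (s ^ k * z⁻¹) ^ mn.2 := fun z hz =>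
    hF _ _ ((hx z hz).trans_lt (hσp l hl)) ((hy z hz).trans_lt (hσp k hk))
  refine ⟨?_, ?_⟩
  · have h1 : DifferentiableOn ℂ (fun z => ∑' mn : ℕ × ℕ,
        a mn.1 mn.2 * (s ^ l * z) ^ mn.1 * (s ^ k * z⁻¹) ^ mn.2) U := by
      refine Complex.differentiableOn_tsum_of_summable_norm husum ?_ hUo htb
      intro mn z hz
      have hz0 : z ≠ 0 := norm_pos_iff.1 (hUpos z hz)
      apply DifferentiableAt.differentiableWithinAt
      fun_prop (disch := assumption)
    exact (h1.congr hFe).div_const _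
  · intro z hz
    have hz0 : z ≠ 0 := norm_pos_iff.1 (hUpos z hz)
    have hsum : Summable (fun mn : ℕ × ℕ =>
        a mn.1 mn.2 * (s ^ l * z) ^ mn.1 * (s ^ k * z⁻¹) ^ mn.2) :=
      Summable.of_norm_bounded husum fun mn => htb mn z hz
    have h2 := (hsum.hasSum.div_const (s ^ (k * l))).sub (hP z hz0)
    rw [← hFe z hz] at h2
    have h3 : HasSum (fun mn => (σ ^ (k * l + 1))⁻¹ * ‖s‖ * u mn)
      ((σ ^ (k * l + 1))⁻¹ * ‖s‖ * ∑' mn, u mn) := husum.hasSum.mul_left _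
    have h4 := h2.norm_le_of_bounded h3 ?_
    · refine h4.trans (le_of_eq ?_); ring
    · rintro ⟨m, n⟩
      simp only
      rcases lt_trichotomy (l * m + k * n) (k * l) with h | h | h
      · rw [if_neg h.ne, hNewton m n h]
        simp only [zero_mul, zero_div, sub_zero, norm_zero]
        have := hu0 (m, n)
        positivity
      · rw [if_pos h]
        have : a m n * (s ^ l * z) ^ m * (s ^ k * z⁻¹) ^ n / s ^ (k * l) -
            a m n * z ^ m * z⁻¹ ^ n = 0 := by
          rw [← h, mul_pow, mul_pow, ← pow_mul, ← pow_mul, pow_add]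
          field_simp
          ring
        rw [this, norm_zero]
        have := hu0 (m, n)
        positivity
      · rw [if_neg h.ne', sub_zero]
        obtain ⟨j, hj⟩ := Nat.exists_eq_add_of_lt h
        have e1 : a m n * (s ^ l * z) ^ m * (s ^ k * z⁻¹) ^ n / s ^ (k * l) =
            a m n * (s ^ j * s) * z ^ m * z⁻¹ ^ n := by
          have : s ^ (l * m) * s ^ (k * n) = s ^ (k * l) * (s ^ j * s) := by
            rw [← pow_add, hj, pow_add, pow_add]; ring
          rw [div_eq_iff (pow_ne_zero _ hs0), mul_pow, mul_pow, ← pow_mul, ← pow_mul]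
          linear_combination (a m n * z ^ m * z⁻¹ ^ n) * this
        have e2 : (σ ^ (k * l + 1))⁻¹ * ‖s‖ * u (m, n) =
            ‖a m n‖ * (σ ^ j * ‖s‖) * R ^ m * R ^ n := by
          have : σ ^ (l * m) * σ ^ (k * n) = σ ^ (k * l + 1) * σ ^ j := by
            rw [← pow_add, hj, ← pow_add]; congr 1; ring
          simp only [hu]
          rw [mul_assoc, inv_mul_eq_iff_eq_mul₀ (by positivity), mul_pow, mul_pow, ← pow_mul,
            ← pow_mul]
          linear_combination (‖s‖ * ‖a m n‖ * R ^ m * R ^ n) * this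
        rw [e1, e2]
        simp only [norm_mul, norm_pow]
        have := hz.2.le
        have := hUinv z hz
        gcongr

/-- Vanishing of the middle-annulus contribution: if the Newton polygon of `F` is
the single segment joining `(k,0)` and `(0,l)`, then for every `R₁ > 1` and every
`0 < c < 1/max(k,l)`,
`|s|^{2l-2klc} · ∫_{1/R₁ < |z| < R₁} |s^{-kl}·F(s^l z, s^k z⁻¹)|^{-2c} dλ(z) → 0`
as `s → 0`, `s ≠ 0`. -/
theorem middle_annulus_contribution_tendsto_zero
    (R₀ : ℝ) (hR₀ : 0 < R₀) (a : ℕ → ℕ → ℂ) (F : ℂ → ℂ → ℂ)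
    (hconv : ∀ x y : ℂ, ‖x‖ < R₀ → ‖y‖ < R₀ →
      Summable (fun mn : ℕ × ℕ => ‖a mn.1 mn.2‖ * ‖x‖ ^ mn.1 * ‖y‖ ^ mn.2))
    (hF : ∀ x y : ℂ, ‖x‖ < R₀ → ‖y‖ < R₀ →
      F x y = ∑' mn : ℕ × ℕ, a mn.1 mn.2 * x ^ mn.1 * y ^ mn.2)
    (k l : ℕ) (hk : 0 < k) (hl : 0 < l)
    (hak : a k 0 ≠ 0) (hal : a 0 l ≠ 0)
    (hNewton : ∀ m n : ℕ, l * m + k * n < k * l → a m n = 0)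
    (R₁ : ℝ) (hR₁ : 1 < R₁) (c : ℝ) (hc0 : 0 < c) (hc1 : c < 1 / (max k l : ℕ)) :
    Tendsto
      (fun s : ℂ =>
        ENNReal.ofReal (‖s‖ ^ (2 * (l : ℝ) - 2 * k * l * c)) *
          ∫⁻ z in {z : ℂ | 1 / R₁ < ‖z‖ ∧ ‖z‖ < R₁},
            ENNReal.ofReal (‖F (s ^ l * z) (s ^ k * z⁻¹) / s ^ (k * l)‖ ^ (-(2 * c))))
      (nhdsWithin 0 {0}ᶜ) (nhds 0) := by
  have hck : c * k < 1 := by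
    have hmax : (0 : ℝ) < (max k l : ℕ) := by
      exact_mod_cast lt_of_lt_of_le hk (le_max_left k l)
    have h1 : c * (max k l : ℕ) < 1 := (lt_div_iff₀ hmax).1 hc1
    have h2 : (k : ℝ) ≤ (max k l : ℕ) := by exact_mod_cast le_max_left k l
    nlinarith
  obtain ⟨q, d, N, hq, hqd, hN, hdk, hsum⟩ := mac_P a k l hk hl hak
  obtain ⟨C₀, hC₀⟩ := mac_uniform R₀ hR₀ a F hconv hF k l hk hl hNewton (2 * R₁) (by linarith)
    (fun z => (z⁻¹) ^ l * q.eval (z ^ N)) hsum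
  set U : Set ℂ := {z : ℂ | 1 / (2 * R₁) < ‖z‖ ∧ ‖z‖ < 2 * R₁} with hU
  have hUo : IsOpen U :=
    (isOpen_lt continuous_const continuous_norm).inter (isOpen_lt continuous_norm continuous_const)
  set S : Set ℂ := {z : ℂ | 1 / R₁ ≤ ‖z‖ ∧ ‖z‖ ≤ R₁} with hS
  have hSU : S ⊆ U := by
    intro z hz
    refine ⟨lt_of_lt_of_le ?_ hz.1, lt_of_le_of_lt hz.2 (by linarith)⟩
    exact one_div_lt_one_div_of_lt (by linarith) (by linarith)
  have hScomp : IsCompact S := by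
    refine (isCompact_closedBall (0 : ℂ) R₁).of_isClosed_subset ?_ ?_
    · exact (isClosed_le continuous_const continuous_norm).inter
        (isClosed_le continuous_norm continuous_const)
    · intro z hz
      simpa using hz.2
  obtain ⟨C, hC, hbound⟩ : ∃ C : ℝ≥0∞, C ≠ ⊤ ∧ ∀ᶠ s in nhdsWithin (0 : ℂ) {0}ᶜ,
      ∫⁻ z in S, ENNReal.ofReal
        (‖F (s ^ l * z) (s ^ k * z⁻¹) / s ^ (k * l)‖ ^ (-(2 * c))) ≤ C := by
    refine hScomp.induction_on (p := fun V => ∃ C : ℝ≥0∞, C ≠ ⊤ ∧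
      ∀ᶠ s in nhdsWithin (0 : ℂ) {0}ᶜ, ∫⁻ z in V, ENNReal.ofReal
        (‖F (s ^ l * z) (s ^ k * z⁻¹) / s ^ (k * l)‖ ^ (-(2 * c))) ≤ C) ?_ ?_ ?_ ?_
    · exact ⟨0, by simp, by simp⟩
    · rintro V W hVW ⟨C, hC, h⟩
      refine ⟨C, hC, h.mono fun s hs => (lintegral_mono_set hVW).trans hs⟩
    · rintro V W ⟨C, hC, h⟩ ⟨C', hC', h'⟩
      refine ⟨C + C', ENNReal.add_ne_top.2 ⟨hC, hC'⟩, ?_⟩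
      filter_upwards [h, h'] with s hs hs'
      exact (lintegral_union_le _ _ _).trans (add_le_add hs hs')
    · intro z₀ hz₀
      have hz₀0 : z₀ ≠ 0 := norm_pos_iff.1 (lt_of_lt_of_le (by positivity) hz₀.1)
      obtain ⟨e, he, Q, hQc, hQ0, hfac⟩ := mac_factor q hq d N l hqd hN z₀ hz₀0
      have hce : c * e < 1 := by
        have : (e : ℝ) ≤ k := by exact_mod_cast he.trans hdk
        nlinarith
      obtain ⟨V, hV, C, hC, h⟩ := mac_local hUo (hSU hz₀) (fun z => (z⁻¹) ^ l * q.eval (z ^ N)) Q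
        (fun s z => F (s ^ l * z) (s ^ k * z⁻¹) / s ^ (k * l)) C₀ hC₀ e (fun z _ => hfac z)
        hQc hQ0 hc0 hce
      exact ⟨V, nhdsWithin_le_nhds hV, C, hC, h⟩
  have hβ : 0 < 2 * (l : ℝ) - 2 * k * l * c := by
    have hl' : (0 : ℝ) < l := by exact_mod_cast hl
    nlinarith
  have hlim : Tendsto (fun s : ℂ => ENNReal.ofReal (‖s‖ ^ (2 * (l : ℝ) - 2 * k * l * c)) * C)
      (nhdsWithin 0 {0}ᶜ) (nhds 0) := by
    have h1 : Tendsto (fun s : ℂ => ‖s‖ ^ (2 * (l : ℝ) - 2 * k * l * c))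
        (nhdsWithin 0 {0}ᶜ) (nhds 0) := by
      have hcont : Continuous (fun s : ℂ => ‖s‖ ^ (2 * (l : ℝ) - 2 * k * l * c)) :=
        continuous_norm.rpow_const fun _ => Or.inr hβ.le
      have := hcont.tendsto 0
      rw [norm_zero, Real.zero_rpow hβ.ne'] at this
      exact this.mono_left nhdsWithin_le_nhds
    have h2 := ENNReal.tendsto_ofReal h1
    rw [ENNReal.ofReal_zero] at h2
    have h3 := ENNReal.Tendsto.mul_const (b := C) h2 (Or.inr hC)
    rwa [zero_mul] at h3
  refine tendsto_of_tendsto_of_tendsto_of_le_of_le' tendsto_const_nhds hlim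
    (Eventually.of_forall fun _ => zero_le) ?_
  filter_upwards [hbound] with s hs
  gcongr
  refine (lintegral_mono_set ?_).trans hs
  exact fun z hz => ⟨hz.1.le, hz.2.le⟩
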